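/- Let m ≥ 2 be an integer and B > 0. There is a constant C, depending only on m and B, such that for every real 2m×m matrix J with operator norm ‖J‖ ≤ B, every u ∈ ℝ^{2m}, every 1 ≤ i ≤ m, every x ∈ ℝ^{2m}, every t > 0, and all p, p' ∈ ℝ^m with |p' − p| < 2^{m+3} t, one has |(1+|u|^{4m})^{−1} (∂^0_i ∂^1_i g)_t(x − Jp + ut)| ≤ C t^{−2m} ∑_{n≥0} 2^{−4nm} χ(|x − Jp'| ≤ 2^n t), where χ(𝒜) equals 1 if the condition 𝒜 holds and 0 otherwise. -/

import Mathlib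

open MeasureTheory Matrix
open scoped ENNReal NNReal BigOperators

noncomputable section

namespace SBL

/-- The set of corners of the `m`-dimensional cube: functions `{1,…,m} → {0,1}`. -/
abbrev Corner (m : ℕ) := Fin m → Fin 2

/-- Index type for `ℝ^{2m}`: coordinates `x^0_i` (left) and `x^1_i` (right). -/
abbrev Idx (m : ℕ) := Fin m ⊕ Fin m

/-- The coordinate of `ℝ^{2m}` selected by the corner `j` at position `i`. -/
def sel {m : ℕ} (j : Corner m) (i : Fin m) : Idx m :=
  if j i = 0 then Sum.inl i else Sum.inr i

/-- The projection `Π_j : ℝ^{2m} → ℝ^m`, `Π_j x = (x_1^{j(1)},…,x_m^{j(m)})`. -/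
def proj {m : ℕ} (j : Corner m) (x : Idx m → ℝ) : Fin m → ℝ := fun i => x (sel j i)

/-- The projection `Π_j` as an `m × 2m` matrix. -/
def projM {m : ℕ} (j : Corner m) : Matrix (Fin m) (Idx m) ℝ :=
  Matrix.of fun i k => if k = sel j i then 1 else 0

/-- `A_j := Π_j J`, the `m × m` matrix obtained by applying `Π_j` to (the columns of) a
`2m × m` matrix `J`, i.e. selecting rows of `J` according to the corner `j`. -/
def Amat {m : ℕ} (J : Matrix (Idx m) (Fin m) ℝ) (j : Corner m) : Matrix (Fin m) (Fin m) ℝ :=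
  Matrix.of fun i k => J (sel j i) k

/-- Euclidean norm on a finite pi type. -/
def en {ι : Type*} [Fintype ι] (x : ι → ℝ) : ℝ := Real.sqrt (∑ i, (x i) ^ 2)

/-- Operator norm of a matrix with respect to the Euclidean norms. -/
def opNorm {ι κ : Type*} [Fintype ι] [Fintype κ] [DecidableEq κ] (A : Matrix ι κ ℝ) : ℝ :=
  ‖LinearMap.toContinuousLinearMap (Matrix.toEuclideanLin A)‖

/-- `Δ`-regularity of a square matrix: `max(‖A‖, |det A|⁻¹) ≤ Δ` (in particular `det A ≠ 0`). -/
def IsReg {m : ℕ} (Δ : ℝ) (A : Matrix (Fin m) (Fin m) ℝ) : Prop :=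
  opNorm A ≤ Δ ∧ A.det ≠ 0 ∧ |A.det|⁻¹ ≤ Δ

/-- A Calderón–Zygmund kernel of order `n` in `ℝ^m`, given by its multiplier `K̂` on
`ℝ^m ∖ {0}`: it is `n` times continuously differentiable there and satisfies the symbol
estimates `‖D^k K̂(η)‖ ≤ |η|^{-k}` for all `k ≤ n`. -/
def IsCZ {m : ℕ} (n : ℕ) (Khat : (Fin m → ℝ) → ℂ) : Prop :=
  ContDiffOn ℝ n Khat {0}ᶜ ∧
  ∀ k : ℕ, k ≤ n → ∀ η : Fin m → ℝ, η ≠ 0 →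
    ‖iteratedFDerivWithin ℝ k Khat {0}ᶜ η‖ ≤ (en η) ^ (-(k : ℝ))

/-- Fourier transform of a (nice) function on `ℝ^{2m}`. -/
def fourierT {m : ℕ} (φ : (Idx m → ℝ) → ℝ) (ξ : Idx m → ℝ) : ℂ :=
  ∫ x : Idx m → ℝ, Complex.exp (-2 * Real.pi * Complex.I * (∑ k, x k * ξ k)) * (φ x : ℂ)

/-- The principal value `p.v. ∫_{ℝ^{2m}} (∏_j F_j(Π_j x)) K(Πx) dx`, defined as
`∫_{ℝ^m} φ̂(−Π^T η) K̂(η) dη` with `φ = ∏_j F_j ∘ Π_j`. -/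
def pv {m : ℕ} (P : Matrix (Fin m) (Idx m) ℝ) (Khat : (Fin m → ℝ) → ℂ)
    (F : Corner m → (Fin m → ℝ) → ℝ) : ℂ :=
  ∫ η : Fin m → ℝ, fourierT (fun x => ∏ j, F j (proj j x)) (-(P.transpose.mulVec η)) * Khat η

/-- Upper `m×m` block `J^0` of a `2m×m` matrix. -/
def Jb0 {m : ℕ} (J : Matrix (Idx m) (Fin m) ℝ) : Matrix (Fin m) (Fin m) ℝ :=
  J.submatrix Sum.inl id

/-- Lower `m×m` block `J^1` of a `2m×m` matrix. -/
def Jb1 {m : ℕ} (J : Matrix (Idx m) (Fin m) ℝ) : Matrix (Fin m) (Fin m) ℝ :=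
  J.submatrix Sum.inr id

/-- `Π^J := (I, −J^0 (J^1)⁻¹)`. -/
def PiJ {m : ℕ} (J : Matrix (Idx m) (Fin m) ℝ) : Matrix (Fin m) (Idx m) ℝ :=
  Matrix.fromCols 1 (-(Jb0 J * (Jb1 J)⁻¹))

/-- The dyadic cube with parameters `Q = (k, n)`: `∏_i [2^k n_i, 2^k (n_i+1))`. -/
def dC {m : ℕ} (Q : ℤ × (Fin m → ℤ)) : Set (Fin m → ℝ) :=
  {x | ∀ i, (2:ℝ)^Q.1 * (Q.2 i : ℝ) ≤ x i ∧ x i < (2:ℝ)^Q.1 * ((Q.2 i : ℝ) + 1)}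

/-- `Q*`: the cube with the same center as `Q` and three times the side length. -/
def dCstar {m : ℕ} (Q : ℤ × (Fin m → ℤ)) : Set (Fin m → ℝ) :=
  {x | ∀ i, (2:ℝ)^Q.1 * ((Q.2 i : ℝ) - 1) ≤ x i ∧ x i < (2:ℝ)^Q.1 * ((Q.2 i : ℝ) + 2)}

/-- A (1/2-)sparse collection of dyadic cubes. -/
def IsSparse {m : ℕ} (S : Set (ℤ × (Fin m → ℤ))) : Prop :=
  ∀ Q ∈ S,
    (∑' Q' : {q : ℤ × (Fin m → ℤ) // q ∈ S ∧ dC q ⊆ dC Q}, volume (dC Q'.val)) ≤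
      2 * volume (dC Q)

/-- The average `[F]_S := (|S|⁻¹ ∫_S |F|^{2^{m-1}})^{2^{1-m}}`. -/
def avg {m : ℕ} (S : Set (Fin m → ℝ)) (F : (Fin m → ℝ) → ℝ) : ℝ :=
  (((volume S).toReal)⁻¹ * ∫ x in S, |F x| ^ (2^(m-1) : ℕ)) ^ ((2:ℝ) ^ ((1:ℤ) - (m:ℤ)))

/-- The closed axis-parallel box `∏_i [a_i, b_i]`. -/
def box {m : ℕ} (a b : Fin m → ℝ) : Set (Fin m → ℝ) := {x | ∀ i, a i ≤ x i ∧ x i ≤ b i}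

/-- Reciprocal eccentricity `ε_R = (min_i |I_i|)/(max_i |I_i|)` of the box `∏_i [a_i,b_i]`. -/
def ecc {m : ℕ} (a b : Fin m → ℝ) : ℝ := (⨅ i, (b i - a i)) / (⨆ i, (b i - a i))

/-- Modified strong maximal function evaluated on a set `S`:
`sup { (ε_R^α)^{2^{1-m}} [F]_R : R ∈ ℛ, S ⊆ R }` (as an extended real). -/
def Mal {m : ℕ} (α : ℝ) (F : (Fin m → ℝ) → ℝ) (S : Set (Fin m → ℝ)) : ℝ≥0∞ :=
  ⨆ (a : Fin m → ℝ) (b : Fin m → ℝ) (_ : ∀ i, a i < b i) (_ : S ⊆ box a b),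
    ENNReal.ofReal ((ecc a b ^ α) ^ ((2:ℝ) ^ ((1:ℤ) - (m:ℤ))) * avg (box a b) F)

/-- `M_α(F)(A𝒯) := sup_{Q ∈ 𝒯} M_α(F)(AQ)`. -/
def MalTree {m : ℕ} (α : ℝ) (F : (Fin m → ℝ) → ℝ) (A : Matrix (Fin m) (Fin m) ℝ)
    (T : Set (ℤ × (Fin m → ℤ))) : ℝ≥0∞ :=
  ⨆ Q ∈ T, Mal α F (A.mulVec '' dC Q)

/-- A convex tree of dyadic cubes with top cube `Qt`. -/
def ConvexTree {m : ℕ} (T : Set (ℤ × (Fin m → ℤ))) (Qt : ℤ × (Fin m → ℤ)) : Prop :=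
  Qt ∈ T ∧ (∀ Q ∈ T, dC Q ⊆ dC Qt) ∧
  ∀ Q ∈ T, ∀ Q' : ℤ × (Fin m → ℤ), dC Q ⊆ dC Q' → dC Q' ⊆ dC Qt → Q' ∈ T

/-- The Gaussian `g(x) = e^{−π|x|²}` on `ℝ^{2m}`. -/
def gss {m : ℕ} (x : Idx m → ℝ) : ℝ := Real.exp (-Real.pi * ∑ k, (x k) ^ 2)

/-- The mixed partial derivative `∂^0_i ∂^1_i g`. -/
def ddg {m : ℕ} (i : Fin m) (x : Idx m → ℝ) : ℝ :=
  fderiv ℝ (fun y : Idx m → ℝ => fderiv ℝ gss y (Pi.single (Sum.inl i) (1:ℝ))) x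
    (Pi.single (Sum.inr i) (1:ℝ))

/-- Isotropic `L¹` dilation on `ℝ^{2m}`: `φ_t(x) = t^{-2m} φ(t⁻¹ x)`. -/
def dil {m : ℕ} (t : ℝ) (φ : (Idx m → ℝ) → ℝ) (x : Idx m → ℝ) : ℝ :=
  (t ^ (2*m))⁻¹ * φ (t⁻¹ • x)

/-- Matrix dilation: `φ_D(x) = (det D)⁻¹ φ(D⁻¹ x)`. -/
def dilM {m : ℕ} (D : Matrix (Idx m) (Idx m) ℝ) (φ : (Idx m → ℝ) → ℝ) (x : Idx m → ℝ) : ℝ :=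
  (D.det)⁻¹ * φ (D⁻¹.mulVec x)

/-- The region `Ω_𝒯 = ∪_{Q∈𝒯} Q × (ℓ(Q)/2, ℓ(Q))` in the upper half space. -/
def Omega {m : ℕ} (T : Set (ℤ × (Fin m → ℤ))) : Set ((Fin m → ℝ) × ℝ) :=
  ⋃ Q ∈ T, (dC Q) ×ˢ Set.Ioo ((2:ℝ)^Q.1 / 2) ((2:ℝ)^Q.1)

/-- The localized form `Λ_𝒯((F_j)_j)`. -/
def LambdaT {m : ℕ} (J : Matrix (Idx m) (Fin m) ℝ) (T : Set (ℤ × (Fin m → ℤ)))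
    (c : ℝ → ℂ) (u : Idx m → ℝ) (i : Fin m) (F : Corner m → (Fin m → ℝ) → ℝ) : ℂ :=
  ∫ z in Omega T, c z.2 * Complex.ofReal ((1 + en u ^ (4*m))⁻¹ * (z.2)⁻¹ *
    ∫ x : Idx m → ℝ, (∏ j, F j (proj j x)) * dil z.2 (ddg i) (x - J.mulVec z.1 + z.2 • u))

/-- `T_k := ∪ {Q ∈ 𝒯 : ℓ(Q) = 2^k}`. -/
def Tkset {m : ℕ} (T : Set (ℤ × (Fin m → ℤ))) (k : ℤ) : Set (Fin m → ℝ) :=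
  ⋃ Q ∈ {q ∈ T | q.1 = k}, dC Q

/-- The form `Λ̃_𝒯((F_j)_j)` with localization in the `x` variables. -/
def LambdaTilde {m : ℕ} (J : Matrix (Idx m) (Fin m) ℝ) (T : Set (ℤ × (Fin m → ℤ)))
    (c : ℝ → ℂ) (u : Idx m → ℝ) (i : Fin m) (F : Corner m → (Fin m → ℝ) → ℝ) : ℂ :=
  ∑' k : ℤ, ∫ t in Set.Ioc ((2:ℝ)^(k-1)) ((2:ℝ)^k),
    c t * Complex.ofReal ((1 + en u ^ (4*m))⁻¹ * t⁻¹ *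
      ∫ p : Fin m → ℝ, ∫ x : Idx m → ℝ,
        (∏ j, Set.indicator ((Amat J j).mulVec '' Tkset T k) (F j) (proj j x)) *
          dil t (ddg i) (x - J.mulVec p + t • u))

/-- The form `Λ(𝒯,J,K)((F_j)_j)` from the induction proposition. -/
def LambdaK {m : ℕ} (J : Matrix (Idx m) (Fin m) ℝ) (T : Set (ℤ × (Fin m → ℤ)))
    (K : ℝ → (Idx m → ℝ) → ℂ) (F : Corner m → (Fin m → ℝ) → ℝ) : ℂ :=
  ∑' k : ℤ, ∫ x : Idx m → ℝ,
    Complex.ofReal (∏ j, Set.indicator ((Amat J j).mulVec '' Tkset T k) (F j) (proj j x)) *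
      ∫ t in Set.Ioc ((2:ℝ)^(k-1)) ((2:ℝ)^k), K t x * (t : ℂ)⁻¹

/-- The reflected corner `i∗j`, differing from `j` exactly at position `i`. -/
def istar {m : ℕ} (i : Fin m) (j : Corner m) : Corner m :=
  fun k => if k = i then 1 - j i else j k

/-- The diagonal matrix `Θ̃` with entry 0 at positions `i ≤ l` and 1 at positions `i > l`
(1-based), i.e. 0 for `i < l` and 1 otherwise in 0-based indexing. -/
def Th {m : ℕ} (l : ℕ) : Matrix (Fin m) (Fin m) ℝ :=
  Matrix.diagonal fun i => if (i : ℕ) < l then 0 else 1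

/-- The block diagonal matrix `Θ = diag(Θ̃, Θ̃)`. -/
def ThB {m : ℕ} (l : ℕ) : Matrix (Idx m) (Idx m) ℝ :=
  Matrix.diagonal (Sum.elim (fun i : Fin m => if (i:ℕ) < l then (0:ℝ) else 1)
    (fun i : Fin m => if (i:ℕ) < l then (0:ℝ) else 1))

end SBL

namespace SBL

theorem en_eq_norm {ι : Type*} [Fintype ι] (x : ι → ℝ) : en x = ‖WithLp.toLp 2 x‖ := by
  simp [en, EuclideanSpace.norm_eq]

theorem en_nonneg {ι : Type*} [Fintype ι] (x : ι → ℝ) : 0 ≤ en x := Real.sqrt_nonneg _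

theorem en_sq {ι : Type*} [Fintype ι] (x : ι → ℝ) : en x ^ 2 = ∑ i, x i ^ 2 :=
  Real.sq_sqrt (Finset.sum_nonneg fun _ _ => sq_nonneg _)

theorem en_sub_le {ι : Type*} [Fintype ι] (x y : ι → ℝ) : en (x - y) ≤ en x + en y := by
  simpa only [en_eq_norm, WithLp.toLp_sub] using norm_sub_le (WithLp.toLp 2 x) (WithLp.toLp 2 y)

theorem en_smul {ι : Type*} [Fintype ι] (c : ℝ) (x : ι → ℝ) : en (c • x) = |c| * en x := by
  simp only [en_eq_norm, WithLp.toLp_smul, norm_smul, Real.norm_eq_abs]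

theorem abs_apply_le_en {ι : Type*} [Fintype ι] (x : ι → ℝ) (i : ι) : |x i| ≤ en x := by
  simpa [en_eq_norm] using PiLp.norm_apply_le (WithLp.toLp 2 x) i

theorem en_mulVec_le {ι κ : Type*} [Fintype ι] [Fintype κ] [DecidableEq κ]
    (A : Matrix ι κ ℝ) (v : κ → ℝ) : en (A.mulVec v) ≤ opNorm A * en v := by
  have h := (LinearMap.toContinuousLinearMap (Matrix.toEuclideanLin A)).le_opNorm
    (WithLp.toLp 2 v)
  simpa [en_eq_norm, opNorm, Matrix.toLpLin_apply] using h

theorem hasFDerivAt_gss {m : ℕ} (x : Idx m → ℝ) :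
    HasFDerivAt gss (gss x • ((-Real.pi) • ∑ k, (2 * x k) •
      ContinuousLinearMap.proj (R := ℝ) (φ := fun _ : Idx m => ℝ) k)) x := by
  refine HasFDerivAt.exp (HasFDerivAt.const_mul ?_ (-Real.pi))
  refine HasFDerivAt.fun_sum fun k _ => ?_
  simpa using (hasFDerivAt_apply (𝕜 := ℝ) (F' := fun _ : Idx m => ℝ) k x).pow 2

theorem fderiv_gss_single {m : ℕ} (x : Idx m → ℝ) (k : Idx m) :
    fderiv ℝ gss x (Pi.single k 1) = -(2 * Real.pi) * (x k * gss x) := by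
  rw [(hasFDerivAt_gss x).fderiv]
  rcases k with k | k <;> simp [Pi.single_apply] <;> ring

theorem ddg_eq {m : ℕ} (i : Fin m) (x : Idx m → ℝ) :
    ddg i x = 4 * Real.pi ^ 2 * (x (Sum.inl i) * x (Sum.inr i) * gss x) := by
  have h : HasFDerivAt (fun y : Idx m → ℝ => -(2 * Real.pi) * (y (Sum.inl i) * gss y)) _ x :=
    ((hasFDerivAt_apply (𝕜 := ℝ) (F' := fun _ : Idx m => ℝ) (Sum.inl i) x).mul
      (hasFDerivAt_gss x)).const_mul _
  simp only [ddg, fderiv_gss_single]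
  rw [h.fderiv]
  simp [Pi.single_apply]
  ring

/-- A polynomial weight times a Gaussian is bounded. -/
theorem mul_one_add_pow_mul_exp_neg_pi_mul_le (k : ℕ) {s : ℝ} (hs : 0 ≤ s) :
    s * (1 + s ^ k) * Real.exp (-Real.pi * s) ≤ 1 + k.factorial := by
  have h1 : s ≤ Real.exp s := by linarith [Real.add_one_le_exp s]
  have h2 : s ^ k ≤ k.factorial * Real.exp s := by
    have := Real.pow_div_factorial_le_exp s hs k
    rw [div_le_iff₀ (by positivity)] at this
    linarith
  have h3 : 1 + s ^ k ≤ (1 + k.factorial) * Real.exp s := by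
    linarith [Real.one_le_exp hs]
  calc s * (1 + s ^ k) * Real.exp (-Real.pi * s)
      ≤ Real.exp s * ((1 + k.factorial) * Real.exp s) * Real.exp (-Real.pi * s) := by gcongr
    _ = (1 + k.factorial) * Real.exp (s + s + -Real.pi * s) := by
        rw [Real.exp_add, Real.exp_add]; ring
    _ ≤ (1 + k.factorial) * 1 := by
        gcongr
        rw [Real.exp_le_one_iff]
        nlinarith [Real.pi_gt_three]
    _ = 1 + k.factorial := mul_one _

theorem abs_ddg_mul_le {m : ℕ} (i : Fin m) (z : Idx m → ℝ) :
    |ddg i z| * (1 + en z ^ (4 * m)) ≤ 4 * Real.pi ^ 2 * (1 + (2 * m).factorial) := by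
  have hg : gss z = Real.exp (-Real.pi * en z ^ 2) := by rw [en_sq, gss]
  have hz := en_nonneg z
  have hpow : en z ^ (4 * m) = (en z ^ 2) ^ (2 * m) := by rw [← pow_mul]; ring_nf
  rw [ddg_eq, hg, abs_mul, abs_of_nonneg (by positivity : 0 ≤ 4 * Real.pi ^ 2), abs_mul, abs_mul,
    Real.abs_exp, hpow]
  calc 4 * Real.pi ^ 2 * (|z (Sum.inl i)| * |z (Sum.inr i)| * Real.exp (-Real.pi * en z ^ 2)) *
        (1 + (en z ^ 2) ^ (2 * m))
      ≤ 4 * Real.pi ^ 2 * (en z * en z * Real.exp (-Real.pi * en z ^ 2)) *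
        (1 + (en z ^ 2) ^ (2 * m)) := by
        gcongr <;> exact abs_apply_le_en _ _
    _ = 4 * Real.pi ^ 2 * (en z ^ 2 * (1 + (en z ^ 2) ^ (2 * m)) *
          Real.exp (-Real.pi * en z ^ 2)) := by ring
    _ ≤ 4 * Real.pi ^ 2 * (1 + (2 * m).factorial) := by
        gcongr
        exact mul_one_add_pow_mul_exp_neg_pi_mul_le _ (sq_nonneg _)

theorem one_add_pow_le_two_pow_mul {a : ℝ} (ha : 0 ≤ a) (k : ℕ) :
    (1 + a) ^ k ≤ 2 ^ k * (1 + a ^ k) := by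
  rcases le_total a 1 with h | h
  · calc (1 + a) ^ k ≤ 2 ^ k := by gcongr; linarith
      _ ≤ 2 ^ k * (1 + a ^ k) := le_mul_of_one_le_right (by positivity) (by
          linarith [pow_nonneg ha k])
  · calc (1 + a) ^ k ≤ (2 * a) ^ k := by gcongr; linarith
      _ = 2 ^ k * a ^ k := mul_pow _ _ _
      _ ≤ 2 ^ k * (1 + a ^ k) := by gcongr; linarith

theorem exists_two_pow_between {w : ℝ} (hw : 0 ≤ w) :
    ∃ n : ℕ, w ≤ 2 ^ n ∧ (2 : ℝ) ^ n ≤ 2 * (1 + w) := by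
  obtain ⟨n, h1, h2⟩ := exists_nat_pow_near (show (1 : ℝ) ≤ 1 + w by linarith) one_lt_two
  exact ⟨n + 1, by linarith, by rw [pow_succ]; linarith⟩

/-- The dyadic sum of indicators of balls dominates a polynomially decaying function. -/
theorem inv_two_mul_one_add_pow_le_tsum {m : ℕ} (hm : 0 < m) {t w r : ℝ} (ht : 0 < t)
    (hw : 0 ≤ w) (hr : r = t * w) :
    ((2 * (1 + w)) ^ (4 * m))⁻¹ ≤ ∑' n : ℕ, (2 : ℝ) ^ (-(4 * (n : ℤ) * (m : ℤ))) *
      (if r ≤ 2 ^ n * t then 1 else 0) := by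
  have hterm (n : ℕ) : (2 : ℝ) ^ (-(4 * (n : ℤ) * (m : ℤ))) = (((2 : ℝ) ^ n) ^ (4 * m))⁻¹ := by
    rw [_root_.zpow_neg, ← pow_mul, ← zpow_natCast]
    congr 2
    push_cast
    ring
  have hsum : Summable fun n : ℕ => (2 : ℝ) ^ (-(4 * (n : ℤ) * (m : ℤ))) *
      (if r ≤ 2 ^ n * t then 1 else 0) := by
    refine Summable.of_nonneg_of_le (fun n => by positivity) (fun n => ?_)
      (summable_geometric_of_lt_one (r := ((2 : ℝ) ^ (4 * m))⁻¹) (by positivity)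
        (inv_lt_one_of_one_lt₀ (one_lt_pow₀ one_lt_two (by lia))))
    rw [hterm, inv_pow, ← pow_mul, ← pow_mul, mul_comm n]
    exact mul_le_of_le_one_right (by positivity) (by split_ifs <;> norm_num)
  obtain ⟨n, h1, h2⟩ := exists_two_pow_between hw
  refine le_trans ?_ (hsum.le_tsum n fun j _ => by positivity)
  rw [if_pos (by rw [hr, mul_comm]; gcongr), mul_one, hterm]
  gcongr

/-- Lemma (Gaussian estimate). -/
theorem statement8 (m : ℕ) (hm : 2 ≤ m) (B : ℝ) (hB : 0 < B) :
    ∃ C : ℝ, 0 < C ∧ ∀ J : Matrix (Idx m) (Fin m) ℝ, opNorm J ≤ B →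
      ∀ u : Idx m → ℝ, ∀ i : Fin m, ∀ x : Idx m → ℝ, ∀ t : ℝ, 0 < t →
      ∀ p p' : Fin m → ℝ, en (p' - p) < 2^(m+3) * t →
        (1 + en u ^ (4*m))⁻¹ * |dil t (ddg i) (x - J.mulVec p + t • u)| ≤
          C * (t^(2*m))⁻¹ * ∑' n : ℕ, (2:ℝ)^(-(4*(n:ℤ)*(m:ℤ))) *
            (if en (x - J.mulVec p') ≤ 2^n * t then 1 else 0) := by
  set K : ℝ := 4 * Real.pi ^ 2 * (1 + (2 * m).factorial) with hK
  have hKpos : 0 < K := by positivity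
  set D : ℝ := B * 2 ^ (m + 3) with hD
  have hDpos : 0 < D := by positivity
  refine ⟨K * ((2 * (1 + D)) ^ (4 * m) * (2 ^ (4 * m) * 2 ^ (4 * m))), by positivity, ?_⟩
  intro J hJ u i x t ht p p' hp
  set z := t⁻¹ • (x - J.mulVec p + t • u) with hz
  set w := en (t⁻¹ • (x - J.mulVec p')) with hw
  have hw0 : 0 ≤ w := en_nonneg _
  have hz0 : 0 ≤ en z := en_nonneg _
  have hu0 : 0 ≤ en u := en_nonneg _
  have hr : en (x - J.mulVec p') = t * w := by
    rw [hw, en_smul, abs_of_pos (inv_pos.2 ht), mul_inv_cancel_left₀ ht.ne']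
  have hwle : w ≤ en z + en u + D := by
    have hsplit : t⁻¹ • (x - J.mulVec p') = z - u - t⁻¹ • J.mulVec (p' - p) := by
      rw [hz, smul_add, inv_smul_smul₀ ht.ne', Matrix.mulVec_sub, ← sub_eq_zero]
      module
    have hJp : en (t⁻¹ • J.mulVec (p' - p)) ≤ D := by
      rw [en_smul, abs_of_pos (inv_pos.2 ht), inv_mul_le_iff₀ ht]
      calc en (J.mulVec (p' - p)) ≤ opNorm J * en (p' - p) := en_mulVec_le _ _
        _ ≤ B * (2 ^ (m + 3) * t) := by gcongr; exact en_nonneg _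
        _ = t * D := by rw [hD]; ring
    rw [hw, hsplit]
    linarith [en_sub_le (z - u) (t⁻¹ • J.mulVec (p' - p)), en_sub_le z u]
  have hpoly : (2 * (1 + w)) ^ (4 * m) ≤ (2 * (1 + D)) ^ (4 * m) * (2 ^ (4 * m) * 2 ^ (4 * m)) *
      ((1 + en u ^ (4 * m)) * (1 + en z ^ (4 * m))) := by
    have hprod : 1 + w ≤ (1 + D) * ((1 + en u) * (1 + en z)) := by
      nlinarith [mul_nonneg hu0 hz0, mul_nonneg hDpos.le (mul_nonneg hu0 hz0),
        mul_nonneg hDpos.le hu0, mul_nonneg hDpos.le hz0]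
    calc (2 * (1 + w)) ^ (4 * m)
        ≤ (2 * ((1 + D) * ((1 + en u) * (1 + en z)))) ^ (4 * m) := by gcongr
      _ = (2 * (1 + D)) ^ (4 * m) * ((1 + en u) ^ (4 * m) * (1 + en z) ^ (4 * m)) := by
          simp only [mul_pow]; ring
      _ ≤ (2 * (1 + D)) ^ (4 * m) * ((2 ^ (4 * m) * (1 + en u ^ (4 * m))) *
            (2 ^ (4 * m) * (1 + en z ^ (4 * m)))) := by
          gcongr <;> exact one_add_pow_le_two_pow_mul ‹_› _
      _ = _ := by ring
  have hdd : |ddg i z| ≤ K / (1 + en z ^ (4 * m)) := by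
    rw [le_div_iff₀ (by positivity)]
    exact abs_ddg_mul_le i z
  refine le_trans ?_ (mul_le_mul_of_nonneg_left
    (inv_two_mul_one_add_pow_le_tsum (by lia : 0 < m) ht hw0 hr) (by positivity))
  rw [dil, abs_mul, abs_of_pos (by positivity : 0 < (t ^ (2 * m))⁻¹), ← hz]
  calc (1 + en u ^ (4 * m))⁻¹ * ((t ^ (2 * m))⁻¹ * |ddg i z|)
      ≤ (1 + en u ^ (4 * m))⁻¹ * ((t ^ (2 * m))⁻¹ * (K / (1 + en z ^ (4 * m)))) := by gcongr
    _ = K * (t ^ (2 * m))⁻¹ * (1 / ((1 + en u ^ (4 * m)) * (1 + en z ^ (4 * m)))) := by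
        field_simp
    _ ≤ K * (t ^ (2 * m))⁻¹ * ((2 * (1 + D)) ^ (4 * m) * (2 ^ (4 * m) * 2 ^ (4 * m)) /
          (2 * (1 + w)) ^ (4 * m)) := by
        refine mul_le_mul_of_nonneg_left ?_ (by positivity)
        rw [div_le_div_iff₀ (by positivity) (by positivity), one_mul]
        exact hpoly
    _ = _ := by ring

end SBL
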